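/- Let H ∈ (1/6, 1/2), let c > 0 be a constant, and let α₁ ∈ (1/4, min(1/2, 3H/2)). Then the integral ∬_{0 < η' ≤ η} g(η, η') (∫_0^{η+η'} f_{α₁}(ξ, η, η') dξ)² dη dη' is finite. -/

import Mathlib

/-!
Write `x = η`, `y = η'`. Since `ξ ≤ 2x` on the range of the inner integral, the factor `ξ^{1-2H}`
is at most `(2x)^{1-2H}`, and the remaining integral of `|ξ-x|^{α-1} |ξ-y|^{α-1}` over all of `ℝ`
equals `K (x-y)^{2α-1}` by scaling, where `K` is finite because `0 < α < 1/2`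
(`integrable_phi`, `inner_bound`).

In the variables `t = x - y` and `y` the outer integrand is therefore at most a constant times
`(y^{1-2H} / (c + y²)) · t^{4α-2} · x^{3-6H} / (c + x²)`. The last factor is at most a constant
times `(1+x)^{1-6H}`, hence, as `H > 1/6`, at most a constant times `(1+t)^{1-6H}`
(`pointwise_bound`). The bound is now a product of a function of `y` and a function of `t`, and each
is integrable on `(0,∞)` by `integrableOn_model`: the conditions are `4α-2 > -1` and
`(4α-2) + (1-6H) < -1`, i.e. `1/4 < α < 3H/2`.
-/

open MeasureTheory intervalIntegral

/-- `f α H ξ η η' = |ξ − η|^{α−1} |ξ − η'|^{α−1} ξ^{1−2H}` if `η' ≤ η`, and `0` otherwise. -/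
noncomputable def fKer (α H ξ η η' : ℝ) : ℝ :=
  if η' ≤ η then |ξ - η| ^ (α - 1) * |ξ - η'| ^ (α - 1) * ξ ^ (1 - 2*H) else 0

/-- `g c H η η' = (η^{1−2H}/(c + η²)) ((η')^{1−2H}/(c + (η')²))`. -/
noncomputable def gKer (c H η η' : ℝ) : ℝ :=
  (η ^ (1 - 2*H) / (c + η ^ 2)) * (η' ^ (1 - 2*H) / (c + η' ^ 2))

/-- The model integral to which every integrability claim reduces. -/
lemma integrableOn_model {a b : ℝ} (ha : -1 < a) (hab : a + b < -1) :
    IntegrableOn (fun t : ℝ => t ^ a * (1 + t) ^ b) (Set.Ioi 0) := by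
  have hb : b ≤ 0 := by linarith
  have hm : Measurable (fun t : ℝ => t ^ a * (1 + t) ^ b) := by fun_prop
  rw [← Set.Ioc_union_Ioi_eq_Ioi (zero_le_one' ℝ)]
  refine IntegrableOn.union ?_ ?_
  · have h1 : IntegrableOn (fun t : ℝ => t ^ a) (Set.Ioc 0 1) := by
      have := intervalIntegral.intervalIntegrable_rpow' (a := 0) (b := 1) ha
      rwa [intervalIntegrable_iff_integrableOn_Ioc_of_le zero_le_one] at this
    refine Integrable.mono' h1 hm.aestronglyMeasurable ?_
    filter_upwards [ae_restrict_mem measurableSet_Ioc] with t ht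
    have h0 : 0 < t := ht.1
    rw [Real.norm_of_nonneg (by positivity)]
    have := Real.rpow_le_one_of_one_le_of_nonpos (by linarith : 1 ≤ 1 + t) hb
    exact mul_le_of_le_one_right (by positivity) this
  · have h1 : IntegrableOn (fun t : ℝ => t ^ (a + b)) (Set.Ioi 1) :=
      integrableOn_Ioi_rpow_of_lt hab zero_lt_one
    refine Integrable.mono' h1 hm.aestronglyMeasurable ?_
    filter_upwards [ae_restrict_mem measurableSet_Ioi] with t ht
    have h0 : 0 < t := zero_lt_one.trans ht
    rw [Real.norm_of_nonneg (by positivity), Real.rpow_add h0]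
    gcongr ?_ * ?_
    exact Real.rpow_le_rpow_of_nonpos h0 (by linarith) hb

lemma integrable_model_abs {a b : ℝ} (ha : -1 < a) (hab : a + b < -1) :
    Integrable (fun t : ℝ => |t| ^ a * (1 + |t|) ^ b) := by
  have hf : IntegrableOn (fun t : ℝ => |t| ^ a * (1 + |t|) ^ b) (Set.Ioi 0) :=
    (integrableOn_model ha hab).congr_fun (fun t ht => by
      simp only [abs_of_pos (Set.mem_Ioi.1 ht)]) measurableSet_Ioi
  have hn : IntegrableOn (fun t : ℝ => |t| ^ a * (1 + |t|) ^ b) (Set.Iic 0) := by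
    rw [← Measure.map_neg_eq_self (volume : Measure ℝ)]
    let m : MeasurableEmbedding fun x : ℝ => -x := (Homeomorph.neg ℝ).measurableEmbedding
    rw [m.integrableOn_map_iff]
    simp_rw [Function.comp_def, abs_neg, Set.neg_preimage, Set.neg_Iic, neg_zero]
    exact Iff.mpr integrableOn_Ici_iff_integrableOn_Ioi hf
  rw [← integrableOn_univ, ← Set.Iic_union_Ioi (a := (0:ℝ))]
  exact hn.union hf

/-- Here `r ≤ s` stand for the distances from a point of `ℝ` to the two singularities `0`, `1`; the
larger one satisfies `s ≥ (1+r)/3`, which leaves a bound in terms of `r` alone. -/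
lemma phi_aux {p r s : ℝ} (hp : p ≤ 0) (hr : 0 ≤ r) (hrs : r ≤ s) (h1 : 1 ≤ r + s) :
    r ^ p * s ^ p ≤ (1 / 3) ^ p * (r ^ p * (1 + r) ^ p) := by
  have : s ^ p ≤ ((1 / 3) * (1 + r)) ^ p :=
    Real.rpow_le_rpow_of_nonpos (by positivity) (by linarith) hp
  rw [Real.mul_rpow (by norm_num) (by positivity)] at this
  calc r ^ p * s ^ p ≤ r ^ p * ((1 / 3) ^ p * (1 + r) ^ p) := by gcongr
    _ = _ := by ring

lemma integrable_phi {p : ℝ} (h1 : -1 < p) (h2 : p < -1 / 2) :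
    Integrable (fun u : ℝ => |u - 1| ^ p * |u| ^ p) := by
  have hi := integrable_model_abs h1 (by linarith : p + p < -1)
  have hd := (hi.add (hi.comp_sub_right 1)).const_mul ((1 / 3 : ℝ) ^ p)
  refine hd.mono' (by fun_prop : Measurable _).aestronglyMeasurable (ae_of_all _ fun u => ?_)
  have h3 : 1 ≤ |u| + |u - 1| := by
    have := abs_sub u (u - 1)
    simpa using this
  rw [Real.norm_of_nonneg (by positivity)]
  simp only [Pi.add_apply]
  rw [mul_add]
  rcases le_total |u| |u - 1| with h | h
  · have := phi_aux (by linarith : p ≤ 0) (abs_nonneg u) h h3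
    have h0 : 0 ≤ (1 / 3 : ℝ) ^ p * (|u - 1| ^ p * (1 + |u - 1|) ^ p) := by positivity
    linarith
  · have := phi_aux (by linarith : p ≤ 0) (abs_nonneg (u - 1)) h (by linarith)
    have h0 : 0 ≤ (1 / 3 : ℝ) ^ p * (|u| ^ p * (1 + |u|) ^ p) := by positivity
    linarith

/-- The scaling constant `K = ∫ |u-1|^{α-1} |u|^{α-1} du`. -/
noncomputable def scaleConst (α : ℝ) : ℝ := ∫ u : ℝ, |u - 1| ^ (α - 1) * |u| ^ (α - 1)

lemma scaleConst_nonneg (α : ℝ) : 0 ≤ scaleConst α :=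
  integral_nonneg fun u => by positivity

lemma kernel_scale {α x y : ℝ} (hxy : y < x) (ξ : ℝ) :
    |ξ - x| ^ (α - 1) * |ξ - y| ^ (α - 1) = (x - y) ^ (2 * α - 2) *
      (|(x - y)⁻¹ * (ξ - y) - 1| ^ (α - 1) * |(x - y)⁻¹ * (ξ - y)| ^ (α - 1)) := by
  have ht : 0 < x - y := by linarith
  have e1 : ξ - x = (x - y) * ((x - y)⁻¹ * (ξ - y) - 1) := by field_simp; ring
  have e2 : ξ - y = (x - y) * ((x - y)⁻¹ * (ξ - y)) := by field_simp
  have e3 : (x - y) ^ (2 * α - 2) = (x - y) ^ (α - 1) * (x - y) ^ (α - 1) := by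
    rw [← Real.rpow_add ht]; ring_nf
  have a1 : |ξ - x| = (x - y) * |(x - y)⁻¹ * (ξ - y) - 1| := by
    conv_lhs => rw [e1, abs_mul, abs_of_pos ht]
  have a2 : |ξ - y| = (x - y) * |(x - y)⁻¹ * (ξ - y)| := by
    conv_lhs => rw [e2, abs_mul, abs_of_pos ht]
  rw [a1, a2, e3, Real.mul_rpow ht.le (abs_nonneg _), Real.mul_rpow ht.le (abs_nonneg _)]
  ring

lemma kernel_integrable {α x y : ℝ} (h0 : 0 < α) (h1 : α < 1 / 2) (hxy : y < x) :
    Integrable (fun ξ : ℝ => |ξ - x| ^ (α - 1) * |ξ - y| ^ (α - 1)) := by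
  have ht : 0 < x - y := by linarith
  have hφ := integrable_phi (p := α - 1) (by linarith) (by linarith)
  simp_rw [kernel_scale hxy]
  exact ((hφ.comp_mul_left' (inv_ne_zero ht.ne')).comp_sub_right y).const_mul _

lemma kernel_integral {α x y : ℝ} (hxy : y < x) :
    ∫ ξ : ℝ, |ξ - x| ^ (α - 1) * |ξ - y| ^ (α - 1) = scaleConst α * (x - y) ^ (2 * α - 1) := by
  have ht : 0 < x - y := by linarith
  simp_rw [kernel_scale hxy]
  rw [MeasureTheory.integral_const_mul,
    integral_sub_right_eq_self
      (fun z : ℝ => |(x - y)⁻¹ * z - 1| ^ (α - 1) * |(x - y)⁻¹ * z| ^ (α - 1)) y,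
    Measure.integral_comp_mul_left (fun z : ℝ => |z - 1| ^ (α - 1) * |z| ^ (α - 1)), inv_inv,
    abs_of_pos ht, smul_eq_mul, ← scaleConst]
  have : (x - y) ^ (2 * α - 1) = (x - y) ^ (2 * α - 2) * (x - y) := by
    rw [← Real.rpow_add_one ht.ne']; ring_nf
  rw [this]; ring

lemma inner_integral_nonneg {α H x y : ℝ} (hy : 0 < y) (hxy : y < x) :
    0 ≤ ∫ ξ in (0:ℝ)..(x + y), fKer α H ξ x y := by
  refine intervalIntegral.integral_nonneg (by linarith) fun ξ hξ => ?_
  have := hξ.1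
  rw [fKer, if_pos hxy.le]
  positivity

lemma inner_bound {α H x y : ℝ} (h0 : 0 < α) (h1 : α < 1 / 2) (hH : H < 1 / 2) (hy : 0 < y)
    (hxy : y < x) :
    ∫ ξ in (0:ℝ)..(x + y), fKer α H ξ x y
      ≤ (2 * x) ^ (1 - 2 * H) * (scaleConst α * (x - y) ^ (2 * α - 1)) := by
  have hJ := kernel_integrable h0 h1 hxy
  have hC : 0 ≤ (2 * x) ^ (1 - 2 * H) := by have : 0 < x := hy.trans hxy; positivity
  rw [intervalIntegral.integral_of_le (by linarith), ← kernel_integral hxy,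
    ← MeasureTheory.integral_const_mul]
  refine le_trans (integral_mono_of_nonneg ?_ (hJ.const_mul _).integrableOn ?_)
    (setIntegral_le_integral (hJ.const_mul _) (ae_of_all _ fun ξ => by positivity))
  · filter_upwards [ae_restrict_mem measurableSet_Ioc] with ξ hξ
    have := hξ.1
    simp only [Pi.zero_apply]
    rw [fKer, if_pos hxy.le]
    positivity
  · filter_upwards [ae_restrict_mem measurableSet_Ioc] with ξ hξ
    rw [fKer, if_pos hxy.le, mul_comm]
    have := hξ.1
    have h2 := hξ.2
    gcongr
    · linarith
    · linarith

lemma weight_denominator {c : ℝ} (hc : 0 < c) (u : ℝ) :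
    min 1 c / 2 * (1 + u) ^ 2 ≤ c + u ^ 2 := by
  have h1 : min 1 c ≤ 1 := min_le_left _ _
  have h2 : min 1 c ≤ c := min_le_right _ _
  have h3 : 0 < min 1 c := lt_min one_pos hc
  nlinarith [mul_nonneg h3.le (sq_nonneg (1 - u)), mul_le_mul_of_nonneg_right h1 (sq_nonneg u)]

lemma weight_le {c u s : ℝ} (hc : 0 < c) (hu : 0 ≤ u) :
    u ^ s / (c + u ^ 2) ≤ (min 1 c / 2)⁻¹ * (u ^ s * (1 + u) ^ (-2 : ℝ)) := by
  have h3 : 0 < min 1 c := lt_min one_pos hc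
  have : u ^ s / (c + u ^ 2) ≤ u ^ s / (min 1 c / 2 * (1 + u) ^ 2) := by
    gcongr
    exact weight_denominator hc u
  refine this.trans_eq ?_
  rw [Real.rpow_neg (by positivity)]
  norm_cast
  field_simp

lemma weight_integrableOn {H c : ℝ} (h0 : 0 < H) (h1 : H < 1 / 2) (hc : 0 < c) :
    IntegrableOn (fun y : ℝ => y ^ (1 - 2 * H) / (c + y ^ 2)) (Set.Ioi 0) := by
  have hm : Measurable (fun y : ℝ => y ^ (1 - 2 * H) / (c + y ^ 2)) := by fun_prop
  refine ((integrableOn_model (a := 1 - 2 * H) (b := -2) (by linarith) (by linarith)).const_mul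
    (min 1 c / 2)⁻¹).mono' hm.aestronglyMeasurable ?_
  filter_upwards [ae_restrict_mem measurableSet_Ioi] with y hy
  have hy : 0 < y := hy
  rw [Real.norm_of_nonneg (by positivity)]
  exact weight_le hc hy.le

/-- Separated bound for the outer integrand off the diagonal. -/
lemma pointwise_bound {H c α x y : ℝ} (hH₁ : 1 / 6 < H) (hH₂ : H < 1 / 2) (hc : 0 < c)
    (h0 : 0 < α) (h1 : α < 1 / 2) (hy : 0 < y) (hxy : y < x) :
    gKer c H x y * (∫ ξ in (0:ℝ)..(x + y), fKer α H ξ x y) ^ 2 ≤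
      ((min 1 c / 2)⁻¹ * (2 ^ (1 - 2 * H)) ^ 2 * scaleConst α ^ 2) *
        (y ^ (1 - 2 * H) / (c + y ^ 2)) *
        ((x - y) ^ (4 * α - 2) * (1 + (x - y)) ^ (1 - 6 * H)) := by
  have hx : 0 < x := hy.trans hxy
  have ht : 0 < x - y := by linarith
  have h3 : 0 < min 1 c := lt_min one_pos hc
  have hK := scaleConst_nonneg α
  have hF : (∫ ξ in (0:ℝ)..(x + y), fKer α H ξ x y) ^ 2 ≤
      ((2 * x) ^ (1 - 2 * H) * (scaleConst α * (x - y) ^ (2 * α - 1))) ^ 2 :=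
    pow_le_pow_left₀ (inner_integral_nonneg hy hxy) (inner_bound h0 h1 hH₂ hy hxy) 2
  have hpow : ((x - y) ^ (2 * α - 1)) ^ 2 = (x - y) ^ (4 * α - 2) := by
    rw [← Real.rpow_mul_natCast ht.le]; push_cast; ring_nf
  -- The growth in `x`: the three powers of `x` combine to `x^{3-6H}`.
  have hxx : x ^ (1 - 2 * H) * (1 + x) ^ (-2 : ℝ) * (x ^ (1 - 2 * H)) ^ 2 ≤
      (1 + (x - y)) ^ (1 - 6 * H) := by
    calc x ^ (1 - 2 * H) * (1 + x) ^ (-2 : ℝ) * (x ^ (1 - 2 * H)) ^ 2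
        = x ^ (3 - 6 * H) * (1 + x) ^ (-2 : ℝ) := by
          have : x ^ (3 - 6 * H) = (x ^ (1 - 2 * H)) ^ 3 := by
            rw [← Real.rpow_mul_natCast hx.le]; push_cast; ring_nf
          rw [this]; ring
      _ ≤ (1 + x) ^ (3 - 6 * H) * (1 + x) ^ (-2 : ℝ) := by
          gcongr
          · linarith
          · linarith
      _ = (1 + x) ^ (1 - 6 * H) := by
          rw [← Real.rpow_add (by positivity)]; ring_nf
      _ ≤ _ := Real.rpow_le_rpow_of_nonpos (by positivity) (by linarith) (by linarith)
  have hw := weight_le (s := 1 - 2 * H) hc hx.le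
  have hA : 0 ≤ y ^ (1 - 2 * H) / (c + y ^ 2) := by positivity
  calc gKer c H x y * (∫ ξ in (0:ℝ)..(x + y), fKer α H ξ x y) ^ 2
      ≤ (((min 1 c / 2)⁻¹ * (x ^ (1 - 2 * H) * (1 + x) ^ (-2 : ℝ))) *
          (y ^ (1 - 2 * H) / (c + y ^ 2))) *
        ((2 * x) ^ (1 - 2 * H) * (scaleConst α * (x - y) ^ (2 * α - 1))) ^ 2 := by
        rw [gKer]
        gcongr
    _ = ((min 1 c / 2)⁻¹ * (2 ^ (1 - 2 * H)) ^ 2 * scaleConst α ^ 2) *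
        (y ^ (1 - 2 * H) / (c + y ^ 2)) * ((x - y) ^ (4 * α - 2) *
          (x ^ (1 - 2 * H) * (1 + x) ^ (-2 : ℝ) * (x ^ (1 - 2 * H)) ^ 2)) := by
        rw [Real.mul_rpow (by norm_num) hx.le, ← hpow]; ring
    _ ≤ _ := by gcongr

/-- Tonelli for a product in the sheared coordinates `(x - y, y)`. -/
lemma lintegral_shear {A B : ℝ → ENNReal} (hA : Measurable A) (hB : Measurable B) :
    ∫⁻ p : ℝ × ℝ, A p.2 * B (p.1 - p.2) = (∫⁻ y, A y) * ∫⁻ t, B t := by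
  rw [Measure.volume_eq_prod, lintegral_prod_symm _ (by fun_prop)]
  have : ∀ y : ℝ, ∫⁻ x, A y * B (x - y) = A y * ∫⁻ t, B t := fun y => by
    rw [lintegral_const_mul _ (by fun_prop), lintegral_sub_right_eq_self B y]
  simp only [this]
  rw [lintegral_mul_const _ hA]

lemma lintegral_indicator_lt_top {h : ℝ → ℝ} (hi : IntegrableOn h (Set.Ioi 0)) :
    ∫⁻ t, (Set.Ioi (0:ℝ)).indicator (fun t => ENNReal.ofReal (h t)) t < ⊤ := by
  rw [lintegral_indicator measurableSet_Ioi]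
  exact hi.lintegral_lt_top

theorem stmt_10 (H c α₁ : ℝ) (hH₁ : 1/6 < H) (hH₂ : H < 1/2) (hc : 0 < c)
    (hα₁ : 1/4 < α₁) (hα₂ : α₁ < min (1/2) (3*H/2)) :
    ∫⁻ p in {q : ℝ × ℝ | 0 < q.2 ∧ q.2 ≤ q.1},
        ENNReal.ofReal
          (gKer c H p.1 p.2 * (∫ ξ in (0:ℝ)..(p.1 + p.2), fKer α₁ H ξ p.1 p.2) ^ 2)
      < ⊤ := by
  obtain ⟨h1, h2⟩ := lt_min_iff.1 hα₂
  set C : ℝ := (min 1 c / 2)⁻¹ * (2 ^ (1 - 2 * H)) ^ 2 * scaleConst α₁ ^ 2 with hC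
  have hC0 : 0 ≤ C := by
    have : 0 < min 1 c := lt_min one_pos hc
    positivity
  set a : ℝ → ℝ := fun y => y ^ (1 - 2 * H) / (c + y ^ 2) with ha
  set b : ℝ → ℝ := fun t => t ^ (4 * α₁ - 2) * (1 + t) ^ (1 - 6 * H) with hb
  have hai : IntegrableOn a (Set.Ioi 0) := weight_integrableOn (by linarith) hH₂ hc
  have hbi : IntegrableOn b (Set.Ioi 0) := integrableOn_model (by linarith) (by linarith)
  set A : ℝ → ENNReal := (Set.Ioi (0:ℝ)).indicator (fun t => ENNReal.ofReal (a t)) with hA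
  -- The value `⊤` on the null set `t = 0` makes the bound below trivial on the diagonal.
  set B : ℝ → ENNReal := fun t => (Set.Ioi (0:ℝ)).indicator (fun t => ENNReal.ofReal (b t)) t +
    ({0} : Set ℝ).indicator (fun _ => ⊤) t with hB
  have hAm : Measurable A := by
    refine Measurable.indicator ?_ measurableSet_Ioi
    fun_prop
  have hBm : Measurable B := by
    refine Measurable.add (Measurable.indicator ?_ measurableSet_Ioi)
      (measurable_const.indicator (measurableSet_singleton 0))
    fun_prop
  have hBi : ∫⁻ t, B t < ⊤ := by
    rw [hB, lintegral_add_right _ (measurable_const.indicator (measurableSet_singleton 0)),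
      lintegral_indicator_const (measurableSet_singleton 0)]
    simpa using lintegral_indicator_lt_top hbi
  have hS : MeasurableSet {q : ℝ × ℝ | 0 < q.2 ∧ q.2 ≤ q.1} :=
    (measurableSet_lt measurable_const measurable_snd).inter
      (measurableSet_le measurable_snd measurable_fst)
  calc _ ≤ ∫⁻ p in {q : ℝ × ℝ | 0 < q.2 ∧ q.2 ≤ q.1},
        ENNReal.ofReal C * (A p.2 * B (p.1 - p.2)) + A p.2 * B (p.1 - p.2) := by
        refine setLIntegral_mono' hS ?_
        rintro ⟨x, y⟩ ⟨hy, hyx⟩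
        simp only at hy hyx ⊢
        have hAy : A y = ENNReal.ofReal (a y) := Set.indicator_of_mem (Set.mem_Ioi.2 hy) _
        have hay : 0 < a y := by simp only [ha]; positivity
        rcases hyx.eq_or_lt with rfl | hlt
        · have : A y * B (y - y) = ⊤ := by
            rw [hAy, sub_self]
            simp [hB, ENNReal.mul_top, hay]
          rw [this]; simp
        · have ht : 0 < x - y := by linarith
          have hBt : B (x - y) = ENNReal.ofReal (b (x - y)) := by
            simp [hB, hlt, ht.ne']
          refine le_trans ?_ le_self_add
          rw [hAy, hBt, ← ENNReal.ofReal_mul hay.le, ← ENNReal.ofReal_mul hC0, ← mul_assoc]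
          exact ENNReal.ofReal_le_ofReal
            (pointwise_bound hH₁ hH₂ hc (by linarith) h1 hy hlt)
    _ ≤ ∫⁻ p : ℝ × ℝ, ENNReal.ofReal C * (A p.2 * B (p.1 - p.2)) + A p.2 * B (p.1 - p.2) :=
        setLIntegral_le_lintegral _ _
    _ = ENNReal.ofReal C * ((∫⁻ y, A y) * ∫⁻ t, B t) + (∫⁻ y, A y) * ∫⁻ t, B t := by
        rw [lintegral_add_right _ (by fun_prop), lintegral_const_mul _ (by fun_prop),
          lintegral_shear hAm hBm]
    _ < ⊤ := by
        have := ENNReal.mul_lt_top (lintegral_indicator_lt_top hai) hBi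
        exact ENNReal.add_lt_top.2 ⟨ENNReal.mul_lt_top ENNReal.ofReal_lt_top this, this⟩
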